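/- Let m = 2^k with k ≥ 1. Then for every allowed m-word v of the period-doubling sequence, the frequency freq(v) exists and equals 2/(3m). -/

import Mathlib

/-!
The proof is by induction on `k`, through the self-similarity `pd (2 * a) = 1 - pd a`,
`pd (2 * a + 1) = 0`.

For words of length `2 * m` with `m ≥ 2`, the word read at `i` determines the parity of `i`: the
letters at odd positions all vanish, while two consecutive even positions cannot both carry `0`.
Once the parity is known, the word read at `i = 2 * j - e` (with `e ∈ {0, 1}`) carries the same
information as the word of length `m` read at `j`. Hence the occurrences of a `2 * m`-word up to
`n` are as many as those of the corresponding `m`-word up to `(n + e) / 2`, and the frequency is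
halved (`cnt_halve`, `tendsto_halve`).

For the base case `m = 2`, let `A n` be the number of `i ≤ n` with `pd i = 1`. The self-similarity
gives `A (2 * q) + A q = q`, whence `|3 * A n - n| ≤ 3 * √n` and `A n / n → 1 / 3`. The words
`10`, `01` and `00` occur `A n`, `A (n + 1)` and `n - A n - A (n + 1)` times, so each has
frequency `1 / 3`.
-/

open Filter Topology

/-- The period-doubling sequence (1-based): `pd i = k_i mod 2` where `k_i` is the
largest `k` such that `2^k` divides `i`. -/
def pd (i : ℕ) : ℕ := padicValNat 2 i % 2

/-- The `m`-word `w_i^(m) = ω_i ω_{i+1} ⋯ ω_{i+m-1}` of the period-doubling sequence. -/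
def wordAt (i m : ℕ) : List ℕ := (List.range m).map (fun h => pd (i + h))

/-- An `m`-word is allowed if it occurs in the period-doubling sequence. -/
def Allowed (m : ℕ) (v : List ℕ) : Prop := ∃ i, 1 ≤ i ∧ wordAt i m = v

/-- The complexity function of the period-doubling sequence. -/
noncomputable def pdComplexity (m : ℕ) : ℕ := Set.ncard {v | Allowed m v}

/-- `HasFreq m v c`: the frequency of the `m`-word `v` in the period-doubling
sequence exists and equals `c`. -/
def HasFreq (m : ℕ) (v : List ℕ) (c : ℝ) : Prop :=
  Tendsto (fun n : ℕ => (((Finset.Icc 1 n).filter (fun i => wordAt i m = v)).card : ℝ) / n)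
    atTop (𝓝 c)

open Classical in
/-- The correlation sum `C(ω, n, m)` of the period-doubling sequence, for a distance
threshold `ε` with `2^{-m} ≤ ε < 2^{-m+1}`. -/
noncomputable def corrSum (n m : ℕ) : ℝ :=
  (((Finset.range n ×ˢ Finset.range n).filter
      (fun p : ℕ × ℕ => ∀ h ∈ Finset.Icc 1 m, pd (p.1 + h) = pd (p.2 + h))).card : ℝ) / (n : ℝ) ^ 2

/-- The period-doubling substitution `ζ(0) = 01`, `ζ(1) = 00`, extended to a morphism
on finite words. -/
def substWord (w : List ℕ) : List ℕ := (w.map (fun a => if a = 0 then [0, 1] else [0, 0])).flatten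

/-- The period-doubling substitution acting on one-sided infinite sequences
(0-based indexing). -/
def substSeq (x : ℕ → ℕ) : ℕ → ℕ := fun n =>
  if n % 2 = 0 then 0 else if x (n / 2) = 0 then 1 else 0

/-! ### Self-similarity of the sequence -/

lemma pd_odd (a : ℕ) : pd (2 * a + 1) = 0 := by
  unfold pd
  rw [padicValNat.eq_zero_of_not_dvd (by omega)]

lemma pd_even (a : ℕ) (ha : 1 ≤ a) : pd (2 * a) = 1 - pd a := by
  unfold pd
  rw [padicValNat.mul (by norm_num) (by omega), padicValNat.self (by norm_num)]
  omega

lemma pd_lt (a : ℕ) : pd a < 2 := Nat.mod_lt _ (by norm_num)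

/-! ### Counting positions -/

/-- The number of `i ∈ {1, …, n}` satisfying `p`. -/
def cnt (p : ℕ → Prop) [DecidablePred p] (n : ℕ) : ℕ := ((Finset.Icc 1 n).filter p).card

lemma cnt_zero (p : ℕ → Prop) [DecidablePred p] : cnt p 0 = 0 := by simp [cnt]

lemma cnt_succ (p : ℕ → Prop) [DecidablePred p] (n : ℕ) :
    cnt p (n + 1) = cnt p n + if p (n + 1) then 1 else 0 := by
  unfold cnt
  rw [← Finset.insert_Icc_right_eq_Icc_add_one (by omega), Finset.filter_insert]
  split_ifs with h
  · rw [Finset.card_insert_of_notMem (by simp)]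
  · simp

/-- If `p` holds only at positions `2 * j - e`, and there exactly when `q j` holds, then counting
`p` up to `n` amounts to counting `q` up to `(n + e) / 2`. -/
lemma cnt_halve (p q : ℕ → Prop) [DecidablePred p] [DecidablePred q] (e : ℕ) (he : e < 2)
    (hp : ∀ i, 1 ≤ i → p i → (i + e) % 2 = 0)
    (hpq : ∀ i j, 1 ≤ i → i + e = 2 * j → (p i ↔ q j)) (n : ℕ) :
    cnt p n = cnt q ((n + e) / 2) := by
  induction n with
  | zero => rw [show (0 + e) / 2 = 0 by omega, cnt_zero, cnt_zero]
  | succ n ih =>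
    rw [cnt_succ, ih]
    rcases Nat.mod_two_eq_zero_or_one (n + 1 + e) with h | h
    · rw [show (n + 1 + e) / 2 = (n + e) / 2 + 1 by omega, cnt_succ]
      simp only [hpq (n + 1) ((n + e) / 2 + 1) (by omega) (by omega)]
    · have : ¬ p (n + 1) := fun hh => by have := hp _ (by omega) hh; omega
      rw [show (n + 1 + e) / 2 = (n + e) / 2 by omega, if_neg this, add_zero]

lemma tendsto_half (e : ℕ) (he : e < 2) :
    Tendsto (fun n : ℕ => (((n + e) / 2 : ℕ) : ℝ) / n) atTop (𝓝 (1 / 2)) := by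
  have h0 : Tendsto (fun n : ℕ => (1 : ℝ) / n) atTop (𝓝 0) := tendsto_one_div_atTop_nhds_zero_nat
  rw [tendsto_iff_dist_tendsto_zero]
  refine squeeze_zero' (Eventually.of_forall fun _ => dist_nonneg) ?_ h0
  filter_upwards [eventually_gt_atTop 0] with n hn
  have hn' : (0 : ℝ) < n := by exact_mod_cast hn
  have h1 : (n : ℝ) ≤ 2 * ((n + e) / 2 : ℕ) + 1 := by exact_mod_cast (by omega)
  have h2 : 2 * (((n + e) / 2 : ℕ) : ℝ) ≤ n + 1 := by exact_mod_cast (by omega)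
  rw [Real.dist_eq, show (((n + e) / 2 : ℕ) : ℝ) / n - 1 / 2
    = (2 * (((n + e) / 2 : ℕ) : ℝ) - n) / 2 / n by field_simp, abs_div, abs_of_pos hn']
  gcongr
  rw [abs_le]
  constructor <;> linarith

lemma tendsto_halve (f : ℕ → ℕ) (e : ℕ) (he : e < 2) (c : ℝ)
    (hf : Tendsto (fun n : ℕ => (f n : ℝ) / n) atTop (𝓝 c)) :
    Tendsto (fun n : ℕ => (f ((n + e) / 2) : ℝ) / n) atTop (𝓝 (c / 2)) := by
  have hq : Tendsto (fun n : ℕ => (n + e) / 2) atTop atTop :=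
    tendsto_atTop.2 fun b => by
      filter_upwards [eventually_ge_atTop (2 * b)] with n hn
      omega
  have := (hf.comp hq).mul (tendsto_half e he)
  rw [mul_one_div] at this
  refine this.congr' ?_
  filter_upwards [eventually_ge_atTop 2] with n hn
  have : (((n + e) / 2 : ℕ) : ℝ) ≠ 0 := by
    have : (n + e) / 2 ≠ 0 := by omega
    exact_mod_cast this
  simp only [Function.comp_apply]
  exact div_mul_div_cancel₀ this

/-! ### The frequency of the letter `1` -/

lemma cnt_one_even (q : ℕ) :
    cnt (fun i => pd i = 1) (2 * q) + cnt (fun i => pd i = 1) q = q := by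
  induction q with
  | zero => simp [cnt_zero]
  | succ q ih =>
    have h := pd_even (q + 1) (by omega)
    have h2 := pd_lt (q + 1)
    have h3 := pd_odd q
    rw [show 2 * (q + 1) = 2 * q + 1 + 1 by ring] at h ⊢
    rw [cnt_succ, cnt_succ, cnt_succ]
    split_ifs <;> omega

lemma cnt_one_odd (q : ℕ) :
    cnt (fun i => pd i = 1) (2 * q + 1) = cnt (fun i => pd i = 1) (2 * q) := by
  rw [cnt_succ, if_neg (by simp [pd_odd]), add_zero]

/-- The discrepancy `d n = 3 * A n - n` satisfies `|d n| ≤ |d (n / 2)| + 1`; a bound of order `√n`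
is weaker than the logarithmic one this yields, but suffices. -/
lemma cnt_one_bound (n : ℕ) :
    (3 * (cnt (fun i => pd i = 1) n : ℤ) - n) ^ 2 ≤ 9 * n := by
  induction n using Nat.strong_induction_on with
  | _ n ih =>
    rcases Nat.eq_zero_or_pos n with rfl | hn
    · simp [cnt_zero]
    obtain ⟨q, hq⟩ : ∃ q, q = n / 2 := ⟨_, rfl⟩
    have hi := ih q (by omega)
    have h1 := cnt_one_even q
    have h2 := cnt_one_odd q
    -- `r` is the last binary digit of `n`
    obtain ⟨r, hr, hnr⟩ : ∃ r : ℤ, (r = 0 ∨ r = 1) ∧ (n : ℤ) = 2 * q + r :=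
      ⟨n - 2 * q, by omega, by omega⟩
    have hA : (cnt (fun i => pd i = 1) n : ℤ) = q - cnt (fun i => pd i = 1) q := by
      rcases hr with hr | hr
      · rw [show n = 2 * q by omega]; omega
      · rw [show n = 2 * q + 1 by omega]; omega
    obtain ⟨d, hd⟩ : ∃ d : ℤ, d = 3 * (cnt (fun i => pd i = 1) q : ℤ) - q := ⟨_, rfl⟩
    rw [← hd] at hi
    rw [hA, show 3 * ((q : ℤ) - cnt (fun i => pd i = 1) q) - n = -(d + r) by
      rw [hd, hnr]; ring, hnr]
    rcases Nat.eq_zero_or_pos q with h0 | h0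
    · subst h0
      have : d = 0 := by rw [hd, cnt_zero]; simp
      subst this
      rcases hr with rfl | rfl <;> norm_num
    · have h0' : (1 : ℤ) ≤ q := by exact_mod_cast h0
      rcases hr with rfl | rfl
      · nlinarith
      · nlinarith [sq_nonneg (d - 1)]

lemma tendsto_one :
    Tendsto (fun n : ℕ => (cnt (fun i => pd i = 1) n : ℝ) / n) atTop (𝓝 (1 / 3)) := by
  have h0 : Tendsto (fun n : ℕ => √((1 : ℝ) / n)) atTop (𝓝 0) := by
    have := (Real.continuous_sqrt.tendsto 0).comp
      (tendsto_one_div_atTop_nhds_zero_nat (𝕜 := ℝ))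
    rw [Real.sqrt_zero] at this
    exact this
  rw [tendsto_iff_dist_tendsto_zero]
  refine squeeze_zero' (Eventually.of_forall fun _ => dist_nonneg) ?_ h0
  filter_upwards [eventually_gt_atTop 0] with n hn
  have hn' : (0 : ℝ) < n := by exact_mod_cast hn
  have hb : (3 * (cnt (fun i => pd i = 1) n : ℝ) - n) ^ 2 ≤ 9 * n := by
    exact_mod_cast cnt_one_bound n
  rw [Real.dist_eq]
  apply Real.abs_le_sqrt
  rw [show (cnt (fun i => pd i = 1) n : ℝ) / n - 1 / 3
    = (3 * (cnt (fun i => pd i = 1) n : ℝ) - n) / (3 * n) by field_simp, div_pow,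
    div_le_div_iff₀ (by positivity) hn']
  nlinarith

/-! ### Words of length two -/

lemma tendsto_one_succ :
    Tendsto (fun n : ℕ => (cnt (fun i => pd i = 1) (n + 1) : ℝ) / n) atTop (𝓝 (1 / 3)) := by
  have h0 : Tendsto (fun n : ℕ => (1 : ℝ) / n) atTop (𝓝 0) := tendsto_one_div_atTop_nhds_zero_nat
  have h1 := tendsto_one.add h0
  rw [add_zero] at h1
  refine tendsto_of_tendsto_of_tendsto_of_le_of_le tendsto_one h1 (fun n => ?_) (fun n => ?_)
  · dsimp only
    gcongr
    rw [cnt_succ]; omega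
  · dsimp only
    rw [← add_div]
    gcongr
    have : cnt (fun i => pd i = 1) (n + 1) ≤ cnt (fun i => pd i = 1) n + 1 := by
      rw [cnt_succ]; split_ifs <;> omega
    exact_mod_cast this

/-- No two consecutive letters are both `1`. -/
lemma pd_succ (i : ℕ) : pd i = 0 ∨ pd (i + 1) = 0 := by
  rcases Nat.even_or_odd' i with ⟨a, rfl | rfl⟩
  · exact Or.inr (pd_odd a)
  · exact Or.inl (pd_odd a)

lemma cnt_one_one : cnt (fun i => pd i = 1) 1 = 0 := by
  simpa [cnt_zero] using cnt_one_odd 0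

lemma base (m i₀ : ℕ) (hm : m = 2) :
    Tendsto (fun n : ℕ => (cnt (fun i => ∀ h < m, pd (i + h) = pd (i₀ + h)) n : ℝ) / n)
      atTop (𝓝 (1 / 3)) := by
  have hstep : ∀ n, cnt (fun i => ∀ h < m, pd (i + h) = pd (i₀ + h)) (n + 1)
      = cnt (fun i => ∀ h < m, pd (i + h) = pd (i₀ + h)) n
        + if pd (n + 1) = pd i₀ ∧ pd (n + 1 + 1) = pd (i₀ + 1) then 1 else 0 := fun n => by
    rw [cnt_succ]
    congr 2
    refine propext ⟨fun H => ⟨H 0 (by omega), H 1 (by omega)⟩, fun H h hh => ?_⟩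
    obtain rfl | rfl : h = 0 ∨ h = 1 := by omega
    exacts [H.1, H.2]
  have ha := pd_lt i₀
  have hb := pd_lt (i₀ + 1)
  have hab := pd_succ i₀
  by_cases h1 : pd i₀ = 1
  · refine tendsto_one.congr fun n => ?_
    congr 2
    induction n with
    | zero => rw [cnt_zero, cnt_zero]
    | succ n ih =>
      have := pd_succ (n + 1)
      rw [hstep, cnt_succ, ih]
      split_ifs <;> omega
  by_cases h2 : pd (i₀ + 1) = 1
  · refine tendsto_one_succ.congr fun n => ?_
    congr 2
    induction n with
    | zero => rw [cnt_zero, zero_add, cnt_one_one]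
    | succ n ih =>
      have := pd_succ (n + 1)
      rw [hstep, cnt_succ, ih]
      split_ifs <;> omega
  · have key : ∀ n, cnt (fun i => ∀ h < m, pd (i + h) = pd (i₀ + h)) n
        + cnt (fun i => pd i = 1) n + cnt (fun i => pd i = 1) (n + 1) = n := fun n => by
      induction n with
      | zero => rw [cnt_zero, cnt_zero, zero_add, cnt_one_one]
      | succ n ih =>
        have := pd_succ (n + 1)
        have := pd_lt (n + 1)
        have := pd_lt (n + 1 + 1)
        rw [hstep, cnt_succ _ (n + 1)]
        have := cnt_succ (fun i => pd i = 1) n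
        split_ifs at * <;> omega
    have h3 := (tendsto_const_nhds (x := (1 : ℝ))).sub (tendsto_one.add tendsto_one_succ)
    rw [show (1 : ℝ) - (1 / 3 + 1 / 3) = 1 / 3 by norm_num] at h3
    refine h3.congr' ?_
    filter_upwards [eventually_gt_atTop 0] with n hn
    have hn' : (0 : ℝ) < n := by exact_mod_cast hn
    have hk : (cnt (fun i => ∀ h < m, pd (i + h) = pd (i₀ + h)) n : ℝ)
        + cnt (fun i => pd i = 1) n + cnt (fun i => pd i = 1) (n + 1) = n := by
      exact_mod_cast key n
    field_simp
    linarith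

/-! ### Doubling the length -/

/-- A word of length at least four determines the parity of the position at which it is read. -/
lemma parity_eq (i i₀ : ℕ) (hi : 1 ≤ i) (hi₀ : 1 ≤ i₀)
    (H : ∀ h < 4, pd (i + h) = pd (i₀ + h)) : i % 2 = i₀ % 2 := by
  -- the letters at `2 * a` and `2 * a + 2` are `1 - pd a` and `1 - pd (a + 1)`
  have two_even : ∀ a, 1 ≤ a → pd (2 * a) = 0 → pd (2 * a + 2) = 0 → False := by
    intro a ha h1 h2
    rw [pd_even a ha] at h1
    rw [show 2 * a + 2 = 2 * (a + 1) by ring, pd_even (a + 1) (by omega)] at h2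
    have := pd_succ a
    omega
  have aux : ∀ x y, 1 ≤ x → x % 2 = 0 → y % 2 = 1 →
      (∀ h < 4, pd (x + h) = pd (y + h)) → False := by
    intro x y hx hx0 hy1 H
    obtain ⟨a, rfl⟩ : ∃ a, x = 2 * a := ⟨x / 2, by omega⟩
    obtain ⟨b, rfl⟩ : ∃ b, y = 2 * b + 1 := ⟨y / 2, by omega⟩
    refine two_even a (by omega) ?_ ?_
    · exact (H 0 (by omega)).trans (pd_odd b)
    · rw [H 2 (by omega), show 2 * b + 1 + 2 = 2 * (b + 1) + 1 by ring, pd_odd]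
  rcases Nat.mod_two_eq_zero_or_one i with h | h <;>
    rcases Nat.mod_two_eq_zero_or_one i₀ with h' | h'
  · omega
  · exact (aux i i₀ hi h h' H).elim
  · exact (aux i₀ i hi₀ h' h fun k hk => (H k hk).symm).elim
  · omega

/-- Positions `2 * j - e` and `2 * j₀ - e` carry the same word of length `2 * m` iff `j` and `j₀`
carry the same word of length `m`. -/
lemma word_double (m e i i₀ j j₀ : ℕ) (he : e < 2) (hi : 1 ≤ i) (hi₀ : 1 ≤ i₀)
    (hj : i + e = 2 * j) (hj₀ : i₀ + e = 2 * j₀) :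
    (∀ h < 2 * m, pd (i + h) = pd (i₀ + h)) ↔ ∀ h < m, pd (j + h) = pd (j₀ + h) := by
  constructor
  · intro H h hh
    have := H (2 * h + e) (by omega)
    rw [show i + (2 * h + e) = 2 * (j + h) by omega,
      show i₀ + (2 * h + e) = 2 * (j₀ + h) by omega, pd_even _ (by omega),
      pd_even _ (by omega)] at this
    have := pd_lt (j + h)
    have := pd_lt (j₀ + h)
    omega
  · intro H h hh
    rcases Nat.mod_two_eq_zero_or_one (i + h) with h' | h'
    · obtain ⟨g, hg⟩ : ∃ g, h = 2 * g + e := ⟨(h - e) / 2, by omega⟩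
      rw [show i + h = 2 * (j + g) by omega, show i₀ + h = 2 * (j₀ + g) by omega,
        pd_even _ (by omega), pd_even _ (by omega), H g (by omega)]
    · rw [show i + h = 2 * ((i + h) / 2) + 1 by omega,
        show i₀ + h = 2 * ((i₀ + h) / 2) + 1 by omega, pd_odd, pd_odd]

lemma freq_pow (k : ℕ) : ∀ i₀, 1 ≤ i₀ →
    Tendsto (fun n : ℕ =>
      (cnt (fun i => ∀ h < 2 ^ (k + 1), pd (i + h) = pd (i₀ + h)) n : ℝ) / n)
      atTop (𝓝 (2 / (3 * 2 ^ (k + 1)))) := by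
  induction k with
  | zero =>
    intro i₀ _
    have := base (2 ^ (0 + 1)) i₀ (by norm_num)
    rwa [show (1 : ℝ) / 3 = 2 / (3 * 2 ^ (0 + 1)) by norm_num] at this
  | succ k ih =>
    intro i₀ hi₀
    -- `e` is the parity of `i₀`, and `i₀ = 2 * j₀ - e`
    obtain ⟨e, he⟩ : ∃ e, e = i₀ % 2 := ⟨_, rfl⟩
    obtain ⟨j₀, hj₀⟩ : ∃ j₀, i₀ + e = 2 * j₀ := ⟨(i₀ + e) / 2, by omega⟩
    have hpow : 2 ^ (k + 1 + 1) = 2 * 2 ^ (k + 1) := by ring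
    have hpos : 2 ≤ 2 ^ (k + 1) := by
      have := Nat.one_le_two_pow (n := k)
      rw [pow_succ]; omega
    have hc : (2 : ℝ) / (3 * 2 ^ (k + 1 + 1)) = 2 / (3 * 2 ^ (k + 1)) / 2 := by
      rw [pow_succ _ (k + 1)]; field_simp
    rw [hc]
    refine (tendsto_halve _ e (by omega) _ (ih j₀ (by omega))).congr fun n => ?_
    congr 2
    refine (cnt_halve _ _ e (by omega) ?_ ?_ n).symm
    · intro i hi H
      have := parity_eq i i₀ hi hi₀ fun h hh => H h (by omega)
      omega
    · intro i j hi hj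
      rw [hpow]
      exact word_double _ e i i₀ j j₀ (by omega) hi hi₀ hj hj₀

theorem pd_freq_pow_two (k m : ℕ) (hk : 1 ≤ k) (hm : m = 2 ^ k) (v : List ℕ)
    (hv : Allowed m v) : HasFreq m v (2 / (3 * m : ℝ)) := by
  obtain ⟨i₀, hi₀, rfl⟩ := hv
  obtain ⟨k, rfl⟩ : ∃ l, k = l + 1 := ⟨k - 1, by omega⟩
  subst hm
  have := freq_pow k i₀ hi₀
  unfold HasFreq
  push_cast
  refine this.congr fun n => ?_
  unfold cnt
  congr 3
  ext i
  simp [wordAt]
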